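/- arXiv:1212.3529 — 3 statements merged into one kernel-verified Lean document; each statement's English description precedes it below -/
import Mathlib

section
/- Let R be a ring with a left Artinian left quotient ring Q = C⁻¹R, and let I be a C-closed ideal of R such that I ⊆ n. Then the set C_{R/I} of regular elements of the factor ring R/I is equal to {c + I : c ∈ C}. -/
open Function

universe u v

/-- A regular element of a ring: a two-sided non-zero-divisor. -/
def IsRegElem {R : Type*} [Ring R] (c : R) : Prop :=
  (∀ x : R, c * x = 0 → x = 0) ∧ (∀ x : R, x * c = 0 → x = 0)

/-- The set `C` of regular elements of a ring. -/
def regSet (R : Type*) [Ring R] : Set R := {c : R | IsRegElem c}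

/-- A (left) ideal is two-sided. -/
def Ideal.IsTwoSidedNC {R : Type*} [Ring R] (I : Ideal R) : Prop :=
  ∀ a ∈ I, ∀ r : R, a * r ∈ I

/-- A prime (two-sided) ideal of a possibly noncommutative ring. -/
def Ideal.IsPrimeNC {R : Type*} [Ring R] (P : Ideal R) : Prop :=
  P ≠ ⊤ ∧ P.IsTwoSidedNC ∧ ∀ a b : R, (∀ r : R, a * r * b ∈ P) → a ∈ P ∨ b ∈ P

/-- The prime radical `n` of a ring: the intersection of all prime ideals. -/
def primeRadical (R : Type*) [Ring R] : Ideal R := sInf {P : Ideal R | P.IsPrimeNC}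

/-- `n` is a nilpotent ideal. -/
def IsNilpotentIdeal {R : Type*} [Ring R] (I : Ideal R) : Prop := ∃ k : ℕ, I ^ (k + 1) = ⊥

/-- `φ : R →+* Q` realizes `Q` as a left quotient ring `C⁻¹R` of `R`:  `R` embeds in `Q`,
every regular element of `R` becomes invertible in `Q`, and every element of `Q` has the
form `(φ c)⁻¹ * (φ r)` with `c` regular. -/
structure IsLeftQuotRing {R : Type u} {Q : Type v} [Ring R] [Ring Q] (φ : R →+* Q) : Prop where
  inj : Function.Injective φ
  isUnit : ∀ c : R, IsRegElem c → IsUnit (φ c)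
  denom : ∀ q : Q, ∃ c r : R, IsRegElem c ∧ φ c * q = φ r

/-- Data of a left quotient ring of `R`. -/
structure LeftQuotData (R : Type u) [Ring R] : Type (u + 1) where
  Q : Type u
  [instQ : Ring Q]
  φ : R →+* Q
  quot : IsLeftQuotRing φ

attribute [instance] LeftQuotData.instQ

/-- `R` has a left Artinian left quotient ring `Q = C⁻¹R`. -/
def HasArtinianLeftQuot (R : Type u) [Ring R] : Prop :=
  ∃ d : LeftQuotData R, IsArtinianRing d.Q

/-- A subset of a ring is a left annihilator. -/
def IsLeftAnnihilatorSet {R : Type*} [Ring R] (A : Set R) : Prop :=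
  ∃ S : Set R, A = {r : R | ∀ s ∈ S, r * s = 0}

/-- The ascending chain condition on left annihilators. -/
def ACCLeftAnnihilators (R : Type*) [Ring R] : Prop :=
  ∀ f : ℕ → Set R, (∀ i, IsLeftAnnihilatorSet (f i)) → (∀ i j, i ≤ j → f i ⊆ f j) →
    ∃ N, ∀ k, N ≤ k → f k = f N

/-- The module `M` contains no infinite direct sum of nonzero submodules. -/
def NoInfiniteIndepFamily (R : Type*) (M : Type*) [Ring R] [AddCommGroup M] [Module R M] : Prop :=
  ¬ ∃ f : ℕ → Submodule R M, (∀ i, f i ≠ ⊥) ∧ iSupIndep f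

/-- A left Goldie ring: ACC on left annihilators and no infinite direct sums of nonzero
left ideals. -/
def IsLeftGoldie (R : Type*) [Ring R] : Prop :=
  ACCLeftAnnihilators R ∧ NoInfiniteIndepFamily R R

/-- The subquotient `n^i/n^{i+1}` of `R` determined by the prime radical `n`. -/
abbrev grPiece (R : Type*) [Ring R] (i : ℕ) :=
  ↥(primeRadical R ^ i) ⧸
    (Submodule.comap (primeRadical R ^ i : Ideal R).subtype (primeRadical R ^ (i + 1)))

/-- The class of `x ∈ n^i` in `n^i/n^{i+1}`. -/
def grMk {R : Type*} [Ring R] (i : ℕ) (x : R) (hx : x ∈ primeRadical R ^ i) : grPiece R i :=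
  Submodule.Quotient.mk ⟨x, hx⟩

/-- The `C̄`-torsion submodule `τ_i` of `n^i/n^{i+1}` (take the span, which coincides with the
set of torsion elements whenever the latter is a submodule, e.g. when `C̄` is a left Ore set);
here `C̄` is represented through `π : R → R̄` as `{c : R | IsRegElem (π c)}`. -/
def tauSub {R : Type u} {Rbar : Type v} [Ring R] [Ring Rbar] (π : R →+* Rbar) (i : ℕ) :
    Submodule R (grPiece R i) :=
  Submodule.span R {u : grPiece R i | ∃ c : R, IsRegElem (π c) ∧ c • u = 0}

/-- The `C̄`-torsionfree module `f_i = (n^i/n^{i+1})/τ_i`. -/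
abbrev fMod {R : Type u} {Rbar : Type v} [Ring R] [Ring Rbar] (π : R →+* Rbar) (i : ℕ) :=
  grPiece R i ⧸ tauSub π i

/-- The class of `x ∈ n^i` in `f_i`. -/
def fMk {R : Type u} {Rbar : Type v} [Ring R] [Ring Rbar] (π : R →+* Rbar) (i : ℕ) (x : R)
    (hx : x ∈ primeRadical R ^ i) : fMod π i :=
  Submodule.Quotient.mk (grMk i x hx)

/-- The subset `C⁻¹K = {(φ c)⁻¹ (φ a) : c ∈ C, a ∈ K}` of a left quotient ring. -/
def locSet {R : Type u} {Q : Type v} [Ring R] [Ring Q] (φ : R →+* Q) (K : Ideal R) : Set Q :=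
  {q : Q | ∃ c a : R, IsRegElem c ∧ a ∈ K ∧ φ c * q = φ a}

/-- A subset of a ring is a left Ore set (multiplicatively closed and satisfying the left
Ore condition). -/
def IsLeftOreSubset {A : Type*} [Ring A] (S : Set A) : Prop :=
  (1 : A) ∈ S ∧ (∀ s ∈ S, ∀ t ∈ S, s * t ∈ S) ∧
    ∀ s ∈ S, ∀ a : A, ∃ t ∈ S, ∃ b : A, t * a = b * s

/-- A left denominator set. -/
def IsLeftDenominatorSet {A : Type*} [Ring A] (S : Set A) : Prop :=
  IsLeftOreSubset S ∧ ∀ a : A, ∀ s ∈ S, a * s = 0 → ∃ t ∈ S, t * a = 0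

/-! Put `J = QI`. Any left ideal `N` of `Q` that is stable under right multiplication by `R` is
two-sided: for `c ∈ C` right multiplication by `c` is injective on the Artinian module `N`, so
`N = Nc`, and then `N c⁻¹r = Nr ⊆ N`. Hence `J` is two-sided, primes of `Q` contract to primes of
`R`, and `J` lies in the prime radical of `Q`, so in its Jacobson radical. As `I` is `C`-closed,
`R/I` embeds in the Artinian ring `Q/J`, which is its left quotient ring. An element `c + I` is
therefore regular if and only if `c` is a unit modulo `J`, that is, a unit of `Q`, that is, regular
in `R`. -/

theorem submodule_map_eq_of_map_le {S M : Type*} [Ring S] [AddCommGroup M] [Module S M]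
    {N : Submodule S M} [IsArtinian S N] {f : M →ₗ[S] M} (hf : Injective f) (h : N.map f ≤ N) :
    N.map f = N := by
  refine le_antisymm h fun x hx => ?_
  have hmaps : ∀ y ∈ N, f y ∈ N := Submodule.map_le_iff_le_comap.mp h
  have hrestrict : Injective (f.restrict hmaps) := fun a b hab =>
    Subtype.ext (hf (congrArg Subtype.val hab))
  obtain ⟨y, hy⟩ := IsArtinian.surjective_of_injective_endomorphism _ hrestrict ⟨x, hx⟩
  exact ⟨y, y.2, congrArg Subtype.val hy⟩

theorem exists_ringHom_injective_of_ker_eq {A B S : Type*} [Ring A] [Ring B] [Ring S]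
    {f : A →+* B} (hf : Surjective f) {g : A →+* S} (hker : RingHom.ker f = RingHom.ker g) :
    ∃ ψ : B →+* S, Injective ψ ∧ ∀ a, ψ (f a) = g a := by
  have hlift := f.liftOfRightInverse_comp_apply _ (rightInverse_surjInv hf) ⟨g, hker.le⟩
  refine ⟨_, (injective_iff_map_eq_zero _).mpr fun b hb => ?_, hlift⟩
  obtain ⟨a, rfl⟩ := hf b
  rw [hlift] at hb
  exact hker.ge hb

section JacobsonRadical

variable {S : Type*} [Ring S]

theorem isUnit_of_sub_one_mem_jacobson_bot {x : S} (hx : x - 1 ∈ Ideal.jacobson (⊥ : Ideal S)) :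
    IsUnit x := by
  have left_inverse {y : S} (hy : y - 1 ∈ Ideal.jacobson (⊥ : Ideal S)) : ∃ z, z * y = 1 := by
    simpa [sub_eq_zero] using Ideal.exists_mul_sub_mem_of_sub_one_mem_jacobson y hy
  obtain ⟨y, hyx⟩ := left_inverse hx
  have hy : y - 1 ∈ Ideal.jacobson (⊥ : Ideal S) := by
    have : y - 1 = -(y * (x - 1)) := by rw [mul_sub, hyx, mul_one, neg_sub]
    exact this ▸ neg_mem (Ideal.mul_mem_left _ y hx)
  obtain ⟨z, hzy⟩ := left_inverse hy
  have hzx : z = x := left_inv_eq_right_inv hzy hyx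
  exact isUnit_iff_exists.mpr ⟨y, hzx ▸ hzy, hyx⟩

theorem isLocalHom_quotient_mk_of_le_jacobson_bot {J : Ideal S} [J.IsTwoSided]
    (hJ : J ≤ Ideal.jacobson ⊥) : IsLocalHom (Ideal.Quotient.mk J) where
  map_nonunit x hx := by
    obtain ⟨y, hxy, hyx⟩ := isUnit_iff_exists.mp hx
    obtain ⟨y, rfl⟩ := Ideal.Quotient.mk_surjective y
    rw [← map_mul, ← map_one (Ideal.Quotient.mk J), Ideal.Quotient.eq] at hxy hyx
    obtain ⟨r, hr⟩ := (isUnit_of_sub_one_mem_jacobson_bot (hJ hxy)).exists_right_inv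
    obtain ⟨l, hl⟩ := (isUnit_of_sub_one_mem_jacobson_bot (hJ hyx)).exists_left_inv
    rw [mul_assoc] at hr
    rw [← mul_assoc] at hl
    exact isUnit_iff_exists_and_exists.mpr ⟨⟨_, hr⟩, ⟨_, hl⟩⟩

theorem isPrimeNC_annihilator (M : Type*) [AddCommGroup M] [Module S M] [IsSimpleModule S M] :
    (Module.annihilator S M).IsPrimeNC := by
  have : Nontrivial M := IsSimpleModule.nontrivial S M
  refine ⟨?_, fun a ha r => Ideal.mul_mem_right r _ ha, fun a b hab => ?_⟩
  · rw [Ne, Module.annihilator_eq_top_iff]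
    exact not_subsingleton M
  · refine or_iff_not_imp_right.mpr fun hb => Module.mem_annihilator.mpr fun y => ?_
    obtain ⟨m, hbm⟩ : ∃ m : M, b • m ≠ 0 := by simpa [Module.mem_annihilator] using hb
    obtain ⟨r, rfl⟩ := IsSimpleModule.toSpanSingleton_surjective S hbm y
    simpa [mul_smul] using Module.mem_annihilator.mp (hab r) m

theorem primeRadical_le_jacobson_bot : primeRadical S ≤ Ideal.jacobson ⊥ := by
  refine le_sInf fun M ⟨_, hM⟩ => ?_
  have : IsSimpleModule S (S ⧸ M) := isSimpleModule_iff_isCoatom.mpr hM.out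
  have hprime : primeRadical S ≤ Module.annihilator S (S ⧸ M) :=
    sInf_le (isPrimeNC_annihilator (S ⧸ M))
  intro a ha
  have := Module.mem_annihilator.mp (hprime ha) (Submodule.Quotient.mk 1)
  rwa [← Submodule.Quotient.mk_smul, smul_eq_mul, mul_one, Submodule.Quotient.mk_eq_zero] at this

end JacobsonRadical

section RegularElements

variable {A B : Type*} [Ring A] [Ring B]

theorem isRegElem_iff_mem_nonZeroDivisors {a : A} : IsRegElem a ↔ a ∈ nonZeroDivisors A :=
  Iff.rfl

theorem IsRegElem.one : IsRegElem (1 : A) :=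
  isRegElem_iff_mem_nonZeroDivisors.mpr (one_mem _)

theorem IsRegElem.mul {a b : A} (ha : IsRegElem a) (hb : IsRegElem b) : IsRegElem (a * b) :=
  isRegElem_iff_mem_nonZeroDivisors.mpr (mul_mem ha hb)

theorem isRegElem_of_isUnit_map {f : A →+* B} (hf : Injective f) {a : A} (ha : IsUnit (f a)) :
    IsRegElem a :=
  isRegElem_iff_mem_nonZeroDivisors.mpr <|
    mem_nonZeroDivisors_of_injective hf ha.mem_nonZeroDivisors

theorem isLeftQuotRing_of_isArtinianRing [IsArtinianRing B] {f : A →+* B} (hf : Injective f)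
    (hfrac : ∀ b, ∃ s a, IsUnit (f s) ∧ f s * b = f a) : IsLeftQuotRing f where
  inj := hf
  isUnit c hc := by
    refine IsArtinianRing.isUnit_iff_isRightRegular.mpr
      (isRightRegular_iff_mem_nonZeroDivisorsRight.mpr fun b hb => ?_)
    obtain ⟨s, a, hs, hsb⟩ := hfrac b
    have hac : a * c = 0 := hf (by rw [map_mul, ← hsb, mul_assoc, hb, mul_zero, map_zero])
    rw [← hs.mul_right_eq_zero, hsb, hc.2 a hac, map_zero]
  denom b := by
    obtain ⟨s, a, hs, hsb⟩ := hfrac b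
    exact ⟨s, a, isRegElem_of_isUnit_map hf hs, hsb⟩

end RegularElements

namespace IsLeftQuotRing

variable {R Q : Type*} [Ring R] [Ring Q] {φ : R →+* Q}

theorem isRegElem_iff_isUnit (hφ : IsLeftQuotRing φ) {c : R} : IsRegElem c ↔ IsUnit (φ c) :=
  ⟨hφ.isUnit c, isRegElem_of_isUnit_map hφ.inj⟩

section Localization

theorem exists_map_mul_eq_mul_map (hφ : IsLeftQuotRing φ) (q : Q) {s : R} (hs : IsRegElem s) :
    ∃ t r, IsRegElem t ∧ φ t * q = φ r * φ s := by
  obtain ⟨s', hs'⟩ := (hφ.isUnit s hs).exists_left_inv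
  obtain ⟨t, r, ht, htr⟩ := hφ.denom (q * s')
  exact ⟨t, r, ht, by rw [← htr, mul_assoc, mul_assoc, hs', mul_one]⟩

variable {K : Ideal R}

theorem map_mem_locSet {a : R} (ha : a ∈ K) : φ a ∈ locSet φ K :=
  ⟨1, a, IsRegElem.one, ha, by rw [map_one, one_mul]⟩

theorem mul_mem_locSet (hφ : IsLeftQuotRing φ) (p : Q) {q : Q} (hq : q ∈ locSet φ K) :
    p * q ∈ locSet φ K := by
  obtain ⟨s, a, hs, ha, hsq⟩ := hq
  obtain ⟨t, r, ht, htp⟩ := hφ.exists_map_mul_eq_mul_map p hs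
  exact ⟨t, r * a, ht, K.mul_mem_left r ha, by rw [← mul_assoc, htp, mul_assoc, hsq, map_mul]⟩

theorem add_mem_locSet (hφ : IsLeftQuotRing φ) {p q : Q} (hp : p ∈ locSet φ K)
    (hq : q ∈ locSet φ K) : p + q ∈ locSet φ K := by
  obtain ⟨s, a, hs, ha, hsp⟩ := hp
  obtain ⟨s', b, hs', hb, hsq⟩ := hq
  obtain ⟨t, r, ht, htr⟩ := hφ.exists_map_mul_eq_mul_map (φ s') hs
  refine ⟨t * s', r * a + t * b, ht.mul hs',
    K.add_mem (K.mul_mem_left r ha) (K.mul_mem_left t hb), ?_⟩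
  calc φ (t * s') * (p + q) = φ t * φ s' * p + φ t * (φ s' * q) := by
        rw [map_mul, mul_add, mul_assoc _ _ q]
    _ = φ r * (φ s * p) + φ t * (φ s' * q) := by rw [htr, mul_assoc]
    _ = φ (r * a + t * b) := by rw [hsp, hsq, map_add, map_mul, map_mul]

theorem coe_map_eq_locSet (hφ : IsLeftQuotRing φ) (K : Ideal R) :
    (K.map φ : Set Q) = locSet φ K := by
  refine Set.Subset.antisymm (fun q hq => ?_) fun q ⟨c, a, hc, ha, hcq⟩ => ?_
  · induction hq using Submodule.span_induction with
    | mem _ hx =>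
      obtain ⟨a, ha, rfl⟩ := hx
      exact map_mem_locSet ha
    | zero => exact map_zero φ ▸ map_mem_locSet K.zero_mem
    | add _ _ _ _ hp hq => exact hφ.add_mem_locSet hp hq
    | smul p _ _ hq => exact hφ.mul_mem_locSet p hq
  · obtain ⟨c', hc'⟩ := (hφ.isUnit c hc).exists_left_inv
    have hq : q = c' * φ a := by rw [← hcq, ← mul_assoc, hc', one_mul]
    exact hq ▸ Ideal.mul_mem_left _ c' (Ideal.mem_map_of_mem φ ha)

theorem comap_map_of_closed (hφ : IsLeftQuotRing φ)
    (hK : ∀ c : R, IsRegElem c → ∀ r : R, c * r ∈ K → r ∈ K) : (K.map φ).comap φ = K := by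
  refine le_antisymm (fun r hr => ?_) Ideal.le_comap_map
  obtain ⟨c, a, hc, ha, hcr⟩ : φ r ∈ locSet φ K := hφ.coe_map_eq_locSet K ▸ hr
  rw [← map_mul] at hcr
  exact hK c hc r (hφ.inj hcr ▸ ha)

end Localization

section Artinian

variable [IsArtinianRing Q]

theorem isTwoSided_of_mul_map_mem (hφ : IsLeftQuotRing φ) {N : Ideal Q}
    (hN : ∀ x ∈ N, ∀ r, x * φ r ∈ N) : N.IsTwoSided := by
  refine ⟨fun {x} q hx => ?_⟩
  obtain ⟨c, r, hc, hcq⟩ := hφ.denom q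
  have hinj : Injective (LinearMap.toSpanSingleton Q Q (φ c)) :=
    (hφ.isUnit c hc).mul_left_injective
  have hNc : Submodule.map (LinearMap.toSpanSingleton Q Q (φ c)) N = N :=
    submodule_map_eq_of_map_le hinj (Submodule.map_le_iff_le_comap.mpr fun x hx => hN x hx c)
  obtain ⟨y, hy, rfl⟩ := hNc.ge hx
  have hyq : y * φ c * q = y * φ r := by rw [mul_assoc, hcq]
  exact hyq ▸ hN y hy r

theorem isTwoSided_map (hφ : IsLeftQuotRing φ) (K : Ideal R) [K.IsTwoSided] :
    (K.map φ).IsTwoSided := by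
  refine hφ.isTwoSided_of_mul_map_mem fun x hx r => ?_
  rw [← SetLike.mem_coe, hφ.coe_map_eq_locSet] at hx ⊢
  obtain ⟨c, a, hc, ha, hcx⟩ := hx
  exact ⟨c, a * r, hc, K.mul_mem_right r ha, by rw [← mul_assoc, hcx, map_mul]⟩

theorem isPrimeNC_comap (hφ : IsLeftQuotRing φ) {P : Ideal Q} (hP : P.IsPrimeNC) :
    (P.comap φ).IsPrimeNC := by
  obtain ⟨hne, htwo, hprime⟩ := hP
  refine ⟨by rwa [Ne, Ideal.comap_eq_top_iff], fun a ha r => ?_, fun a b hab => ?_⟩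
  · rw [Ideal.mem_comap, map_mul]
    exact htwo _ ha _
  · let N : Ideal Q := ⨅ r, Submodule.comap (LinearMap.toSpanSingleton Q Q (φ r * φ b)) P
    have mem_N {x : Q} : x ∈ N ↔ ∀ r, x * φ r * φ b ∈ P := by
      simp [N, mul_assoc]
    have : N.IsTwoSided := hφ.isTwoSided_of_mul_map_mem fun x hx s => mem_N.mpr fun r => by
      simpa only [map_mul, mul_assoc] using mem_N.mp hx (s * r)
    have haN : φ a ∈ N := mem_N.mpr fun r => by simpa using hab r
    refine hprime _ _ fun q => ?_
    simpa using mem_N.mp (N.mul_mem_right q haN) 1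

theorem map_le_primeRadical (hφ : IsLeftQuotRing φ) {K : Ideal R} (hK : K ≤ primeRadical R) :
    K.map φ ≤ primeRadical Q :=
  le_sInf fun _ hP => Ideal.map_le_iff_le_comap.mpr (hK.trans (sInf_le (hφ.isPrimeNC_comap hP)))

variable {R' : Type*} [Ring R'] {ρ : R →+* R'} {J : Ideal Q} [J.IsTwoSided]

theorem exists_isLeftQuotRing_quotient (hφ : IsLeftQuotRing φ) (hρ : Surjective ρ)
    (hker : RingHom.ker ρ = J.comap φ) :
    ∃ ψ : R' →+* Q ⧸ J, IsLeftQuotRing ψ ∧ ∀ r : R, ψ (ρ r) = Ideal.Quotient.mk J (φ r) := by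
  have hker' : RingHom.ker ρ = RingHom.ker ((Ideal.Quotient.mk J).comp φ) := by
    rw [hker, ← RingHom.comap_ker, Ideal.mk_ker]
  obtain ⟨ψ, hψ, hψρ⟩ := exists_ringHom_injective_of_ker_eq hρ hker'
  refine ⟨ψ, isLeftQuotRing_of_isArtinianRing hψ fun b => ?_, hψρ⟩
  obtain ⟨q, rfl⟩ := Ideal.Quotient.mk_surjective b
  obtain ⟨c, r, hc, hcq⟩ := hφ.denom q
  refine ⟨ρ c, ρ r, ?_, ?_⟩
  · rw [hψρ, RingHom.comp_apply]
    exact (hφ.isUnit c hc).map (Ideal.Quotient.mk J)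
  · rw [hψρ, hψρ, RingHom.comp_apply, RingHom.comp_apply, ← map_mul, hcq]

theorem isRegElem_map_iff (hφ : IsLeftQuotRing φ) (hρ : Surjective ρ)
    (hker : RingHom.ker ρ = J.comap φ) (hJ : J ≤ Ideal.jacobson ⊥) {c : R} :
    IsRegElem (ρ c) ↔ IsRegElem c := by
  have := isLocalHom_quotient_mk_of_le_jacobson_bot hJ
  obtain ⟨ψ, hψ, hψρ⟩ := hφ.exists_isLeftQuotRing_quotient hρ hker
  rw [hψ.isRegElem_iff_isUnit, hψρ, isUnit_map_iff, hφ.isRegElem_iff_isUnit]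

end Artinian

end IsLeftQuotRing

/-- **Theorem (`13Sep12`.(1)).** Let `R` be a ring with a left Artinian left quotient ring
`Q = C⁻¹R`, and let `I` be a `C`-closed (two-sided) ideal of `R` with `I ⊆ n`.  Then the
set of regular elements of the factor ring `R/I` (realized by a surjective `ρ : R → R'`
with kernel `I`) equals `{c + I : c ∈ C}`, i.e. the image of `C` under `ρ`. -/
theorem regular_elements_of_factor_ring
    {R : Type u} [Ring R] {Q : Type v} [Ring Q] (φ : R →+* Q)
    (hquot : IsLeftQuotRing φ) (hart : IsArtinianRing Q)
    (I : Ideal R) (hI2 : I.IsTwoSidedNC)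
    (hIclosed : ∀ c : R, IsRegElem c → ∀ r : R, c * r ∈ I → r ∈ I)
    (hIn : I ≤ primeRadical R)
    {R' : Type w} [Ring R'] (ρ : R →+* R') (hρsurj : Function.Surjective ρ)
    (hρker : RingHom.ker ρ = I) :
    {x : R' | IsRegElem x} = ρ '' regSet R := by
  subst hρker
  have := hquot.isTwoSided_map (RingHom.ker ρ)
  have hJ : (RingHom.ker ρ).map φ ≤ Ideal.jacobson ⊥ :=
    (hquot.map_le_primeRadical hIn).trans primeRadical_le_jacobson_bot
  have hcontr : RingHom.ker ρ = ((RingHom.ker ρ).map φ).comap φ :=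
    (hquot.comap_map_of_closed hIclosed).symm
  have hreg (c : R) : IsRegElem (ρ c) ↔ IsRegElem c :=
    hquot.isRegElem_map_iff hρsurj hcontr hJ
  ext x
  obtain ⟨c, rfl⟩ := hρsurj x
  refine ⟨fun hc => ⟨c, (hreg c).mp hc, rfl⟩, ?_⟩
  rintro ⟨d, hd, hdc⟩
  exact hdc ▸ (hreg d).mpr hd
end

section
/- Let R be a ring, I an ideal of R, and S a left Ore set in R consisting of regular elements of R. If the localization S⁻¹R is a left Artinian ring, or a left Noetherian ring, then S⁻¹I is a (two-sided) ideal of S⁻¹R. -/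
open Function

universe u v

/-! `S⁻¹I` is the left ideal `J` of `L` generated by `ψ(I)`, and `J * ψ(R) ⊆ J` since `I` is
two-sided. For `s ∈ S`, right multiplication by `ψ s` therefore induces a surjective endomorphism
of the left module `L ⧸ J`, which is injective when `L` is left Noetherian (as a left Artinian ring
is, by Hopkins–Levitzki). So `x ∈ J` gives `x * (ψ s)⁻¹ ∈ J`, and then `x * (ψ s)⁻¹ * ψ r ∈ J`. -/

theorem mem_of_map_mem_of_surjective_of_le_comap {R M : Type*} [Ring R] [AddCommGroup M]
    [Module R M] {N : Submodule R M} [IsNoetherian R (M ⧸ N)] {f : M →ₗ[R] M} (hf : Surjective f)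
    (hN : N ≤ N.comap f) {x : M} (hx : f x ∈ N) : x ∈ N := by
  have hinj : Injective (N.mapQ N f hN) := by
    refine IsNoetherian.injective_of_surjective_endomorphism _
      (N.mkQ_surjective.forall.2 fun m ↦ ?_)
    obtain ⟨k, rfl⟩ := hf m
    exact ⟨N.mkQ k, N.mapQ_apply N f k⟩
  rw [← Submodule.Quotient.mk_eq_zero] at hx ⊢
  exact (map_eq_zero_iff _ hinj).1 hx

theorem mem_ideal_of_mul_unit_mem {L : Type*} [Ring L] [IsNoetherianRing L] {J : Ideal L} {u : L}
    (hu : IsUnit u) (hJ : ∀ y ∈ J, y * u ∈ J) {x : L} (hx : x * u ∈ J) : x ∈ J :=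
  mem_of_map_mem_of_surjective_of_le_comap (f := LinearMap.toSpanSingleton L L u)
    (IsUnit.isUnit_iff_mulRight_bijective.1 hu).surjective hJ hx

theorem mul_map_mem_ideal_map {R L : Type*} [Ring R] [Semiring L] {I : Ideal R}
    (hI : I.IsTwoSidedNC) (ψ : R →+* L) {x : L} (hx : x ∈ I.map ψ) (r : R) :
    x * ψ r ∈ I.map ψ := by
  have hle : I.map ψ ≤ Submodule.comap (LinearMap.toSpanSingleton L L (ψ r)) (I.map ψ) :=
    Ideal.span_le.2 <| Set.forall_mem_image.2 fun a ha ↦ by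
      simpa using Ideal.mem_map_of_mem ψ (hI a ha r)
  exact hle hx

section LeftFractions

variable {R L : Type*} [Semiring R] [Semiring L] {S : Set R} {ψ : R →+* L}

theorem exists_map_mul_mul_eq_map (hunit : ∀ s ∈ S, IsUnit (ψ s))
    (hdenom : ∀ l : L, ∃ s ∈ S, ∃ a : R, ψ s * l = ψ a) {I : Ideal R} {x : L}
    (hx : ∃ s ∈ S, ∃ a ∈ I, ψ s * x = ψ a) (l : L) :
    ∃ s ∈ S, ∃ a ∈ I, ψ s * (l * x) = ψ a := by
  obtain ⟨s, hs, a, ha, hsx⟩ := hx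
  obtain ⟨q, rfl⟩ : ∃ q, q * ψ s = l :=
    (IsUnit.isUnit_iff_mulRight_bijective.1 (hunit s hs)).surjective l
  obtain ⟨t, ht, b, htl⟩ := hdenom q
  refine ⟨t, ht, b * a, I.mul_mem_left b ha, ?_⟩
  calc ψ t * (q * ψ s * x) = ψ t * q * (ψ s * x) := by simp only [mul_assoc]
    _ = ψ (b * a) := by rw [htl, hsx, map_mul]

theorem coe_ideal_map_eq_leftFractions (hmul : ∀ s ∈ S, ∀ t ∈ S, s * t ∈ S)
    (hunit : ∀ s ∈ S, IsUnit (ψ s)) (hdenom : ∀ l : L, ∃ s ∈ S, ∃ a : R, ψ s * l = ψ a)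
    (I : Ideal R) : (I.map ψ : Set L) = {l : L | ∃ s ∈ S, ∃ a ∈ I, ψ s * l = ψ a} := by
  ext l
  constructor
  · intro hl
    induction hl using Submodule.span_induction with
    | mem x hx =>
      obtain ⟨a, ha, rfl⟩ := hx
      obtain ⟨s, hs, -⟩ := hdenom 0
      exact ⟨s, hs, s * a, I.mul_mem_left s ha, (map_mul ψ s a).symm⟩
    | zero =>
      obtain ⟨s, hs, -⟩ := hdenom 0
      exact ⟨s, hs, 0, I.zero_mem, by simp⟩
    | add x y _ _ hx hy =>
      obtain ⟨s, hs, a, ha, hsx⟩ := hx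
      obtain ⟨t, ht, b, hb, hty⟩ := exists_map_mul_mul_eq_map hunit hdenom hy (ψ s)
      refine ⟨t * s, hmul t ht s hs, t * a + b, I.add_mem (I.mul_mem_left t ha) hb, ?_⟩
      calc ψ (t * s) * (x + y) = ψ t * (ψ s * x) + ψ t * (ψ s * y) := by
            simp only [map_mul, mul_add, mul_assoc]
        _ = ψ (t * a + b) := by rw [hsx, hty, map_add, map_mul]
    | smul l x _ hx => exact exists_map_mul_mul_eq_map hunit hdenom hx l
  · rintro ⟨s, hs, a, ha, hsl⟩
    refine ((I.map ψ).unit_mul_mem_iff_mem (hunit s hs)).1 ?_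
    exact hsl ▸ Ideal.mem_map_of_mem ψ ha

end LeftFractions

theorem ideal_map_isTwoSidedNC {R L : Type*} [Ring R] [Ring L] [IsNoetherianRing L] {I : Ideal R}
    (hI : I.IsTwoSidedNC) {S : Set R} {ψ : R →+* L} (hunit : ∀ s ∈ S, IsUnit (ψ s))
    (hdenom : ∀ l : L, ∃ s ∈ S, ∃ a : R, ψ s * l = ψ a) : (I.map ψ).IsTwoSidedNC := by
  intro x hx l
  obtain ⟨s, hs, a, hsl⟩ := hdenom l
  obtain ⟨y, rfl⟩ : ∃ y, y * ψ s = x :=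
    (IsUnit.isUnit_iff_mulRight_bijective.1 (hunit s hs)).surjective x
  have hy : y ∈ I.map ψ :=
    mem_ideal_of_mul_unit_mem (hunit s hs) (fun z hz ↦ mul_map_mem_ideal_map hI ψ hz s) hx
  rw [mul_assoc, hsl]
  exact mul_map_mem_ideal_map hI ψ hy a

theorem localization_of_ideal_is_ideal_general {R L : Type*} [Ring R] [Ring L] [IsNoetherianRing L]
    {I : Ideal R} (hI : I.IsTwoSidedNC) {S : Set R} (hmul : ∀ s ∈ S, ∀ t ∈ S, s * t ∈ S)
    {ψ : R →+* L} (hunit : ∀ s ∈ S, IsUnit (ψ s))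
    (hdenom : ∀ l : L, ∃ s ∈ S, ∃ a : R, ψ s * l = ψ a) :
    ∃ J : Ideal L, J.IsTwoSidedNC ∧
      (↑J : Set L) = {l : L | ∃ s ∈ S, ∃ a ∈ I, ψ s * l = ψ a} :=
  ⟨I.map ψ, ideal_map_isTwoSidedNC hI hunit hdenom,
    coe_ideal_map_eq_leftFractions hmul hunit hdenom I⟩

/-- **Proposition (`a20Jul12`).** Let `R` be a ring, `I` a (two-sided) ideal of `R`, and
`S` a left Ore set in `R` consisting of regular elements; let `ψ : R → L` realize the left
localization `L = S⁻¹R`.  If `L` is a left Artinian ring or a left Noetherian ring, then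
`S⁻¹I = {s⁻¹a : s ∈ S, a ∈ I}` is a (two-sided) ideal of `L`. -/
theorem localization_of_ideal_is_ideal
    {R : Type u} [Ring R] (I : Ideal R) (hI2 : I.IsTwoSidedNC)
    (S : Set R) (hSreg : S ⊆ regSet R) (hOre : IsLeftOreSubset S)
    {L : Type v} [Ring L] (ψ : R →+* L)
    (hinj : Function.Injective ψ)
    (hunit : ∀ s ∈ S, IsUnit (ψ s))
    (hdenom : ∀ l : L, ∃ s ∈ S, ∃ a : R, ψ s * l = ψ a)
    (hLA : IsArtinianRing L ∨ IsNoetherianRing L) :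
    ∃ J : Ideal L, J.IsTwoSidedNC ∧
      (↑J : Set L) = {l : L | ∃ s ∈ S, ∃ a ∈ I, ψ s * l = ψ a} := by
  have : IsNoetherianRing L := hLA.elim (fun _ ↦ inferInstance) id
  exact localization_of_ideal_is_ideal_general hI2 hOre.2.1 hunit hdenom
end

section
/- Let R be a ring with a left Artinian left quotient ring Q = C⁻¹R. Then: (1) C' = C, i.e. for c ∈ R, c ∈ C if and only if c + n is a regular element of R̄; (2) the ring R̄ = R/n is a semiprime left Goldie ring and the set C̄ of regular elements of R̄ equals {c + n : c ∈ C}. -/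
open Function

universe u v

/-- A ring is semiprime: it has no nonzero nilpotent (two-sided) ideals. -/
def IsSemiprimeRing (A : Type*) [Ring A] : Prop :=
  ∀ I : Ideal A, I.IsTwoSidedNC → (∃ k : ℕ, I ^ (k + 1) = ⊥) → I = ⊥

/-!
Write `J` for the Jacobson radical of `Q`, so that `J` is nilpotent and `Q ⧸ J` is semisimple. Every
element of `Q ⧸ J` is a left fraction of images of elements of `R`, so prime ideals of `Q ⧸ J`
contract to prime ideals of `R`, whence `n ⊆ φ⁻¹ J`; conversely `φ⁻¹ J` is nilpotent, so it lies in
every prime ideal. Thus `n = φ⁻¹ J` and `R̄` embeds in `Q ⧸ J`. Regular elements of `R̄` stay right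
regular in the left Artinian ring `Q ⧸ J`, hence become units there, so `R̄` is a left order in
`Q ⧸ J`. As units lift modulo `J`, regularity of `c` and of `c + n` both say that `φ c` is a unit.
The left Goldie conditions descend to `R̄` from the left Noetherian ring `Q ⧸ J`.
-/

section PrimeRadical

variable {R S : Type*} [Ring R] [Ring S]

theorem le_or_le_of_mul_le_of_isPrimeNC {P I K : Ideal R} (hP : P.IsPrimeNC) (hIK : I * K ≤ P) :
    I ≤ P ∨ K ≤ P := by
  refine or_iff_not_imp_left.2 fun hI b hb ↦ ?_
  obtain ⟨a, haI, haP⟩ := SetLike.not_le_iff_exists.1 hI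
  refine (hP.2.2 a b fun r ↦ hIK ?_).resolve_left haP
  rw [mul_assoc]
  exact Ideal.mul_mem_mul haI (K.mul_mem_left r hb)

theorem le_of_pow_le_of_isPrimeNC {P K : Ideal R} (hP : P.IsPrimeNC) {k : ℕ} (hK : K ^ k ≤ P) :
    K ≤ P := by
  induction k with
  | zero =>
    rw [Submodule.pow_zero, Ideal.one_eq_top] at hK
    exact le_top.trans hK
  | succ k ih => exact (le_or_le_of_mul_le_of_isPrimeNC hP hK).elim ih id

theorem le_primeRadical_of_pow_le {K : Ideal R} {k : ℕ} (hK : K ^ k ≤ primeRadical R) :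
    K ≤ primeRadical R :=
  le_sInf fun _ hP ↦ le_of_pow_le_of_isPrimeNC hP (hK.trans (sInf_le hP))

theorem pow_comap_le_comap_pow (f : R →+* S) (K : Ideal S) (k : ℕ) :
    K.comap f ^ k ≤ (K ^ k).comap f := by
  induction k with
  | zero => simp [Submodule.pow_zero, Ideal.one_eq_top]
  | succ k ih =>
    refine Ideal.mul_le.2 fun a ha b hb ↦ ?_
    rw [Ideal.mem_comap, map_mul]
    exact Ideal.mul_mem_mul (ih ha) hb

theorem comap_le_primeRadical_of_pow_eq_bot {f : R →+* S} (hf : RingHom.ker f ≤ primeRadical R)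
    {K : Ideal S} {k : ℕ} (hK : K ^ k = ⊥) : K.comap f ≤ primeRadical R := by
  refine le_primeRadical_of_pow_le (k := k) ((pow_comap_le_comap_pow f K k).trans ?_)
  rwa [hK]

theorem isSemiprimeRing_of_ker_eq_primeRadical {π : R →+* S} (hπ : Surjective π)
    (hker : RingHom.ker π = primeRadical R) : IsSemiprimeRing S := by
  rintro I - ⟨k, hk⟩
  have hI : I.comap π ≤ RingHom.ker π :=
    (comap_le_primeRadical_of_pow_eq_bot hker.le hk).trans_eq hker.symm
  refine (Submodule.eq_bot_iff I).2 fun a ha ↦ ?_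
  obtain ⟨x, rfl⟩ := hπ a
  exact hI ha

theorem isPrimeNC_annihilator_of_isSimpleModule (M : Type*) [AddCommGroup M] [Module R M]
    [IsSimpleModule R M] : (Module.annihilator R M).IsPrimeNC := by
  have : Nontrivial M := IsSimpleModule.nontrivial R M
  refine ⟨fun h ↦ not_subsingleton M (Module.annihilator_eq_top_iff.1 h),
    fun a ha r ↦ Ideal.mul_mem_right r _ ha, fun a b hab ↦ or_iff_not_imp_right.2 fun hb ↦ ?_⟩
  simp only [Module.mem_annihilator, not_forall] at hab hb ⊢
  obtain ⟨m, hm⟩ := hb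
  intro x
  obtain ⟨r, rfl⟩ := IsSimpleModule.toSpanSingleton_surjective R hm x
  simpa [mul_smul] using hab r m

theorem primeRadical_le_jacobson : primeRadical R ≤ Ring.jacobson R := by
  rw [Ring.jacobson_eq_sInf_isMaximal]
  refine le_sInf fun m hm x hx ↦ ?_
  have : IsSimpleModule R (R ⧸ m) := isSimpleModule_iff_isCoatom.2 (Ideal.isMaximal_def.1 hm)
  have hann : x ∈ Module.annihilator R (R ⧸ m) :=
    Ideal.mem_sInf.1 hx (isPrimeNC_annihilator_of_isSimpleModule (R ⧸ m))
  have hx1 := Module.mem_annihilator.1 hann (Submodule.Quotient.mk 1)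
  rwa [← Submodule.Quotient.mk_smul, Submodule.Quotient.mk_eq_zero, smul_eq_mul, mul_one] at hx1

end PrimeRadical

section Jacobson

variable {R : Type*} [Ring R]

theorem exists_mul_eq_one_of_sub_one_mem_jacobson {x : R} (hx : x - 1 ∈ Ring.jacobson R) :
    ∃ y, y * x = 1 := by
  rw [← Ideal.jacobson_bot] at hx
  simpa [sub_eq_zero] using Ideal.exists_mul_sub_mem_of_sub_one_mem_jacobson x hx

theorem isUnit_of_sub_one_mem_jacobson {x : R} (hx : x - 1 ∈ Ring.jacobson R) : IsUnit x := by
  obtain ⟨y, hyx⟩ := exists_mul_eq_one_of_sub_one_mem_jacobson hx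
  have hy : y - 1 ∈ Ring.jacobson R := by
    have : y - 1 = -(y * (x - 1)) := by rw [mul_sub, hyx, mul_one, neg_sub]
    exact this ▸ neg_mem (Ideal.mul_mem_left _ y hx)
  obtain ⟨z, hzy⟩ := exists_mul_eq_one_of_sub_one_mem_jacobson hy
  exact isUnit_iff_exists.2 ⟨y, left_inv_eq_right_inv hzy hyx ▸ hzy, hyx⟩

theorem isLocalHom_mk_jacobson : IsLocalHom (Ideal.Quotient.mk (Ring.jacobson R)) where
  map_nonunit x hx := by
    obtain ⟨z, hxz, hzx⟩ := isUnit_iff_exists.1 hx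
    obtain ⟨y, rfl⟩ := Ideal.Quotient.mk_surjective z
    rw [← map_mul, ← map_one (Ideal.Quotient.mk _), Ideal.Quotient.eq] at hxz hzx
    obtain ⟨u, hu⟩ := (isUnit_of_sub_one_mem_jacobson hxz).exists_right_inv
    obtain ⟨v, hv⟩ := (isUnit_of_sub_one_mem_jacobson hzx).exists_left_inv
    rw [mul_assoc] at hu
    rw [← mul_assoc] at hv
    exact isUnit_iff_exists.2 ⟨y * u, hu, left_inv_eq_right_inv hv hu ▸ hv⟩

end Jacobson

/-- Every element of `S` is a left fraction `(f c)⁻¹ * f r`. Unlike in `IsLeftQuotRing`, the map `f`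
need not be injective, so that the property passes to quotients of `S`. -/
def HasLeftFractions {R S : Type*} [Ring R] [Ring S] (f : R →+* S) : Prop :=
  ∀ y : S, ∃ c r : R, IsUnit (f c) ∧ f c * y = f r

namespace HasLeftFractions

variable {R S T : Type*} [Ring R] [Ring S] [Ring T] {f : R →+* S}

theorem comp_of_surjective (hf : HasLeftFractions f) {g : S →+* T} (hg : Surjective g) :
    HasLeftFractions (g.comp f) := by
  intro y
  obtain ⟨q, rfl⟩ := hg y
  obtain ⟨c, r, hc, hcr⟩ := hf q
  exact ⟨c, r, hc.map g, by simp [← hcr]⟩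

theorem of_comp {g : S →+* T} (h : HasLeftFractions (g.comp f)) : HasLeftFractions g := fun y ↦
  let ⟨c, r, hc, hcr⟩ := h y
  ⟨f c, f r, hc, hcr⟩

theorem exists_mul_eq_mul (hf : HasLeftFractions f) {s : R} (hs : IsUnit (f s)) (y : S) :
    ∃ c r : R, IsUnit (f c) ∧ f c * y = f r * f s := by
  obtain ⟨u, hu⟩ := hs
  obtain ⟨c, r, hc, hcr⟩ := hf (y * ↑u⁻¹)
  exact ⟨c, r, hc, by rw [← hcr, ← hu, mul_assoc, Units.inv_mul_cancel_right]⟩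

theorem exists_mul_eq_of_mem_map (hf : HasLeftFractions f) {I : Ideal R} {y : S}
    (hy : y ∈ I.map f) : ∃ s a : R, IsUnit (f s) ∧ a ∈ I ∧ f s * y = f a := by
  induction hy using Submodule.span_induction with
  | mem y hy =>
    obtain ⟨a, ha, rfl⟩ := hy
    exact ⟨1, a, by simp, ha, by simp⟩
  | zero => exact ⟨1, 0, by simp, I.zero_mem, by simp⟩
  | add y z _ _ ihy ihz =>
    obtain ⟨s, a, hs, ha, hsa⟩ := ihy
    obtain ⟨t, b, ht, hb, htb⟩ := ihz
    obtain ⟨c, r, hc, hcr⟩ := hf.exists_mul_eq_mul hs (f t)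
    refine ⟨c * t, r * a + c * b, by simpa using hc.mul ht,
      I.add_mem (I.mul_mem_left r ha) (I.mul_mem_left c hb), ?_⟩
    calc f (c * t) * (y + z) = f c * f t * y + f c * (f t * z) := by
          rw [map_mul, mul_add, mul_assoc _ _ z]
      _ = f r * (f s * y) + f c * (f t * z) := by rw [hcr, mul_assoc]
      _ = f (r * a + c * b) := by rw [hsa, htb, map_add, map_mul, map_mul]
  | smul q y _ ih =>
    obtain ⟨s, a, hs, ha, hsa⟩ := ih
    obtain ⟨c, r, hc, hcr⟩ := hf.exists_mul_eq_mul hs q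
    refine ⟨c, r * a, hc, I.mul_mem_left r ha, ?_⟩
    rw [smul_eq_mul, ← mul_assoc, hcr, mul_assoc, hsa, map_mul]

theorem disjoint_map (hf : HasLeftFractions f) (hinj : Injective f) {I K : Ideal R}
    (hIK : Disjoint I K) : Disjoint (I.map f) (K.map f) := by
  rw [Submodule.disjoint_def] at hIK ⊢
  intro y hyI hyK
  obtain ⟨s, a, hs, ha, hsa⟩ := hf.exists_mul_eq_of_mem_map hyI
  obtain ⟨t, b, ht, hb, htb⟩ := hf.exists_mul_eq_of_mem_map hyK
  obtain ⟨c, r, hc, hcr⟩ := hf.exists_mul_eq_mul hs (f t)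
  have hy : f c * (f t * y) = f (r * a) := by rw [← mul_assoc, hcr, mul_assoc, hsa, map_mul]
  have hab : c * b = r * a := hinj (by rw [← hy, htb, map_mul])
  have hra : r * a = 0 := hIK _ (I.mul_mem_left r ha) (hab ▸ K.mul_mem_left c hb)
  rwa [hra, map_zero, hc.mul_right_eq_zero, ht.mul_right_eq_zero] at hy

theorem noInfiniteIndepFamily (hf : HasLeftFractions f) (hinj : Injective f)
    (hS : NoInfiniteIndepFamily S S) : NoInfiniteIndepFamily R R := by
  rintro ⟨I, hne, hind⟩
  refine hS ⟨fun i ↦ Ideal.map f (I i), fun i hi ↦ hne i ?_, fun i ↦ ?_⟩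
  · exact (Ideal.map_eq_bot_iff_of_injective hinj).1 hi
  · simpa only [Ideal.map_iSup] using hf.disjoint_map hinj (hind i)

variable [IsArtinianRing S]

theorem mul_mem_of_forall_mul_map_mem (hf : HasLeftFractions f) {I : Ideal S}
    (hI : ∀ x ∈ I, ∀ r : R, x * f r ∈ I) {x : S} (hx : x ∈ I) (y : S) : x * y ∈ I := by
  obtain ⟨c, r, hc, hcr⟩ := hf y
  -- The left ideal `I` has `I * f c ⊆ I` with `f c` a unit; being Artinian, it has `I * f c = I`.
  let mulRight : I →ₗ[S] I := (LinearMap.toSpanSingleton S S (f c)).restrict fun x hx ↦ hI x hx c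
  have hinj : Injective mulRight := fun y z hyz ↦
    Subtype.ext (hc.mul_right_cancel (congrArg Subtype.val hyz))
  obtain ⟨z, hz⟩ := IsArtinian.surjective_of_injective_endomorphism mulRight hinj ⟨x, hx⟩
  have hzx : (z : S) * f c = x := congrArg Subtype.val hz
  rw [← hzx, mul_assoc, hcr]
  exact hI z z.2 r

theorem isPrimeNC_comap (hf : HasLeftFractions f) {P : Ideal S} (hP : P.IsPrimeNC) :
    (P.comap f).IsPrimeNC := by
  refine ⟨Ideal.comap_ne_top f hP.1, fun a ha r ↦ ?_, fun a b hab ↦ hP.2.2 (f a) (f b) fun y ↦ ?_⟩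
  · rw [Ideal.mem_comap, map_mul]
    exact hP.2.1 _ ha _
  · let I : Ideal S := ⨅ r : R, Submodule.comap (LinearMap.toSpanSingleton S S (f (r * b))) P
    have mem_I {x : S} : x ∈ I ↔ ∀ r : R, x * f (r * b) ∈ P := by simp [I]
    have hI : ∀ x ∈ I, ∀ r : R, x * f r ∈ I := fun x hx r ↦ mem_I.2 fun s ↦ by
      simpa [mul_assoc] using mem_I.1 hx (r * s)
    have ha : f a ∈ I := mem_I.2 fun r ↦ by simpa [mul_assoc] using hab r
    simpa using mem_I.1 (hf.mul_mem_of_forall_mul_map_mem hI ha y) 1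

theorem primeRadical_le_comap (hf : HasLeftFractions f) :
    primeRadical R ≤ (primeRadical S).comap f := fun _ hx ↦
  Ideal.mem_sInf.2 fun {_} hP ↦ Ideal.mem_sInf.1 hx (hf.isPrimeNC_comap hP)

end HasLeftFractions

section LeftAnnihilators

variable {R S : Type*} [Ring R] [Ring S]

theorem exists_ideal_of_isLeftAnnihilatorSet {A : Set R} (hA : IsLeftAnnihilatorSet A) :
    ∃ L : Ideal R, (L : Set R) = A := by
  obtain ⟨T, rfl⟩ := hA
  exact ⟨⨅ t ∈ T, Ideal.torsionOf R R t, by ext; simp⟩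

theorem accLeftAnnihilators_of_isNoetherianRing [IsNoetherianRing R] : ACCLeftAnnihilators R := by
  intro A hA hmono
  choose L hL using fun i ↦ exists_ideal_of_isLeftAnnihilatorSet (hA i)
  let chain : ℕ →o Ideal R :=
    ⟨L, fun i j hij ↦ SetLike.coe_subset_coe.1 (by rw [hL, hL]; exact hmono i j hij)⟩
  obtain ⟨N, hN⟩ := monotone_stabilizes_iff_noetherian.2 ‹IsNoetherianRing R› chain
  exact ⟨N, fun k hk ↦ by rw [← hL, ← hL]; exact congrArg _ (hN k hk).symm⟩

theorem IsLeftAnnihilatorSet.mem_iff {A : Set R} (hA : IsLeftAnnihilatorSet A) {x : R} :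
    x ∈ A ↔ ∀ t, (∀ a ∈ A, a * t = 0) → x * t = 0 := by
  refine ⟨fun hx t ht ↦ ht x hx, fun hx ↦ ?_⟩
  obtain ⟨T, rfl⟩ := hA
  exact fun t ht ↦ hx t fun a ha ↦ ha t ht

theorem accLeftAnnihilators_of_injective {f : R →+* S} (hf : Injective f)
    (hS : ACCLeftAnnihilators S) : ACCLeftAnnihilators R := by
  intro A hA hmono
  let T (i : ℕ) : Set R := {t | ∀ a ∈ A i, a * t = 0}
  let B (i : ℕ) : Set S := {y | ∀ s ∈ f '' T i, y * s = 0}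
  have hAB (i : ℕ) : A i = f ⁻¹' B i := by
    ext x
    rw [(hA i).mem_iff]
    simp [B, T, ← map_mul, map_eq_zero_iff f hf]
  have hTanti {i j : ℕ} (hij : i ≤ j) : T j ⊆ T i := fun _ ht a ha ↦ ht a (hmono i j hij ha)
  have hBmono (i j : ℕ) (hij : i ≤ j) : B i ⊆ B j := fun _ hy s hs ↦
    hy s (Set.image_mono (hTanti hij) hs)
  obtain ⟨N, hN⟩ := hS B (fun i ↦ ⟨f '' T i, rfl⟩) hBmono
  exact ⟨N, fun k hk ↦ by rw [hAB, hAB, hN k hk]⟩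

end LeftAnnihilators

theorem isLeftGoldie_of_isNoetherianRing {R : Type*} [Ring R] [IsNoetherianRing R] :
    IsLeftGoldie R := by
  refine ⟨accLeftAnnihilators_of_isNoetherianRing, ?_⟩
  rintro ⟨I, hne, hind⟩
  have := WellFoundedGT.finite_of_iSupIndep hind hne
  exact not_finite ℕ

section LeftOrder

variable {R S : Type*} [Ring R] [Ring S] {f : R →+* S}

theorem isRegElem_of_isUnit_map_s18 (hf : Injective f) {c : R} (hc : IsUnit (f c)) : IsRegElem c :=
  ⟨fun x hx ↦ hf (by rw [map_zero, ← hc.mul_right_eq_zero, ← map_mul, hx, map_zero]),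
    fun x hx ↦ hf (by rw [map_zero, ← hc.mul_left_eq_zero, ← map_mul, hx, map_zero])⟩

theorem IsLeftQuotRing.isRegElem_iff_isUnit_s18 (h : IsLeftQuotRing f) {c : R} :
    IsRegElem c ↔ IsUnit (f c) :=
  ⟨h.isUnit c, isRegElem_of_isUnit_map_s18 h.inj⟩

theorem IsLeftQuotRing.hasLeftFractions (h : IsLeftQuotRing f) : HasLeftFractions f := fun y ↦
  let ⟨c, r, hc, hcr⟩ := h.denom y
  ⟨c, r, h.isUnit c hc, hcr⟩

theorem IsLeftQuotRing.isLeftGoldie (h : IsLeftQuotRing f) (hS : IsLeftGoldie S) :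
    IsLeftGoldie R :=
  ⟨accLeftAnnihilators_of_injective h.inj hS.1,
    h.hasLeftFractions.noInfiniteIndepFamily h.inj hS.2⟩

theorem HasLeftFractions.isRightRegular_map (hf : HasLeftFractions f) (hinj : Injective f)
    {c : R} (hc : ∀ x, x * c = 0 → x = 0) : IsRightRegular (f c) := by
  refine isRightRegular_iff_left_eq_zero_of_mul.2 fun y hy ↦ ?_
  obtain ⟨s, r, hs, hsr⟩ := hf y
  have hr : r = 0 := hc r (hinj (by rw [map_mul, ← hsr, mul_assoc, hy, mul_zero, map_zero]))
  rwa [hr, map_zero, hs.mul_right_eq_zero] at hsr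

theorem HasLeftFractions.isLeftQuotRing [IsArtinianRing S] (hf : HasLeftFractions f)
    (hinj : Injective f) : IsLeftQuotRing f where
  inj := hinj
  isUnit _ hc := IsArtinianRing.isUnit_iff_isRightRegular.2 (hf.isRightRegular_map hinj hc.2)
  denom y :=
    let ⟨c, r, hc, hcr⟩ := hf y
    ⟨c, r, isRegElem_of_isUnit_map_s18 hinj hc, hcr⟩

theorem HasLeftFractions.exists_isLeftQuotRing_of_ker_eq [IsArtinianRing S]
    (hf : HasLeftFractions f) {A : Type*} [Ring A] {π : R →+* A} (hπ : Surjective π)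
    (hker : RingHom.ker π = RingHom.ker f) :
    ∃ ψ : A →+* S, ψ.comp π = f ∧ IsLeftQuotRing ψ := by
  let ψ : A →+* S := π.liftOfSurjective hπ ⟨f, hker.le⟩
  have hψ : ψ.comp π = f := RingHom.liftOfRightInverse_comp π _ _ ⟨f, hker.le⟩
  have hinj : Injective ψ := (injective_iff_map_eq_zero ψ).2 fun a ha ↦ by
    obtain ⟨x, rfl⟩ := hπ a
    rwa [← RingHom.comp_apply, hψ, ← RingHom.mem_ker, ← hker] at ha
  exact ⟨ψ, hψ, (of_comp (hψ ▸ hf)).isLeftQuotRing hinj⟩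

theorem IsLeftQuotRing.primeRadical_eq_comap_jacobson [IsSemiprimaryRing S]
    (h : IsLeftQuotRing f) : primeRadical R = (Ring.jacobson S).comap f := by
  have hfrac : HasLeftFractions ((Ideal.Quotient.mk (Ring.jacobson S)).comp f) :=
    h.hasLeftFractions.comp_of_surjective Ideal.Quotient.mk_surjective
  apply le_antisymm
  · intro x hx
    have := primeRadical_le_jacobson (hfrac.primeRadical_le_comap hx)
    rwa [Ring.jacobson_quotient_jacobson, Ideal.mem_bot, RingHom.comp_apply,
      Ideal.Quotient.eq_zero_iff_mem] at this
  · obtain ⟨k, hk⟩ := IsSemiprimaryRing.isNilpotent (R := S)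
    refine comap_le_primeRadical_of_pow_eq_bot ?_ hk
    rw [(RingHom.injective_iff_ker_eq_bot f).1 h.inj]
    exact bot_le

end LeftOrder

theorem factor_by_prime_radical_is_semiprime_goldie_general
    {R Q Rbar : Type*} [Ring R] [Ring Q] [Ring Rbar] [IsSemiprimaryRing Q] {φ : R →+* Q}
    (hquot : IsLeftQuotRing φ) {π : R →+* Rbar} (hπsurj : Surjective π)
    (hπker : RingHom.ker π = primeRadical R) :
    (∀ c : R, IsRegElem c ↔ IsRegElem (π c)) ∧
    IsSemiprimeRing Rbar ∧ IsLeftGoldie Rbar ∧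
    {x : Rbar | IsRegElem x} = π '' regSet R := by
  let p := Ideal.Quotient.mk (Ring.jacobson Q)
  have hfrac : HasLeftFractions (p.comp φ) :=
    hquot.hasLeftFractions.comp_of_surjective Ideal.Quotient.mk_surjective
  have hker : RingHom.ker π = RingHom.ker (p.comp φ) := by
    rw [hπker, hquot.primeRadical_eq_comap_jacobson, ← RingHom.comap_ker, Ideal.mk_ker]
  obtain ⟨ψ, hψ, hψquot⟩ := hfrac.exists_isLeftQuotRing_of_ker_eq hπsurj hker
  have hreg (c : R) : IsRegElem c ↔ IsRegElem (π c) := by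
    have : IsLocalHom p := isLocalHom_mk_jacobson
    rw [hquot.isRegElem_iff_isUnit_s18, hψquot.isRegElem_iff_isUnit_s18, ← RingHom.comp_apply, hψ,
      RingHom.comp_apply, isUnit_map_iff p]
  have hpre : regSet R = π ⁻¹' {x | IsRegElem x} := Set.ext hreg
  exact ⟨hreg, isSemiprimeRing_of_ker_eq_primeRadical hπsurj hπker,
    hψquot.isLeftGoldie isLeftGoldie_of_isNoetherianRing,
    by rw [hpre, Set.image_preimage_eq _ hπsurj]⟩

/-- **Proposition (`b13Sep12`.(4),(5)).** Let `R` be a ring with a left Artinian left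
quotient ring `Q = C⁻¹R`, `n` its prime radical and `R̄ = R/n` (realized by a surjective
`π` with kernel `n`).  Then:
(1) `C' = C`: for `c ∈ R`, `c` is regular in `R` iff `c + n` is regular in `R̄`;
(2) `R̄` is a semiprime left Goldie ring and the set `C̄` of regular elements of `R̄`
equals `{c + n : c ∈ C}`, i.e. the image of `C` under `π`. -/
theorem factor_by_prime_radical_is_semiprime_goldie
    {R : Type u} [Ring R] {Q : Type v} [Ring Q] (φ : R →+* Q)
    (hquot : IsLeftQuotRing φ) (hart : IsArtinianRing Q)
    {Rbar : Type w} [Ring Rbar] (π : R →+* Rbar)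
    (hπsurj : Function.Surjective π) (hπker : RingHom.ker π = primeRadical R) :
    (∀ c : R, IsRegElem c ↔ IsRegElem (π c)) ∧
    IsSemiprimeRing Rbar ∧ IsLeftGoldie Rbar ∧
    {x : Rbar | IsRegElem x} = π '' regSet R :=
  factor_by_prime_radical_is_semiprime_goldie_general hquot hπsurj hπker
end
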